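/- arXiv:2508.07857 — 3 statements merged into one kernel-verified Lean document; each statement's English description precedes it below -/
import Mathlib

section
/- For every multi-parameter q, the state τ_q is tracial on ℂ_q[W]: for all x, y ∈ ℂ_q[W] one has τ_q(xy) = τ_q(yx), i.e. ⟨xy δ_e, δ_e⟩ = ⟨yx δ_e, δ_e⟩. -/
/-!
Each `T s` (`s` simple) is symmetric on the basis vectors, because `p_s(q)` is real. Writing
`T w` as the product of the `T s` along a reduced word of `w` gives `T w δ_e = δ_w`
(`hecke_delta_one`), and, reading the word backwards, `(T w)* δ_e = δ_{w⁻¹}`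
(`hecke_adjoint_delta_one`). Hence `⟨T v T w δ_e, δ_e⟩ = ⟨δ_w, δ_{v⁻¹}⟩` is `1` if `v w = e` and `0`
otherwise, a condition symmetric in `v` and `w`; the theorem follows by bilinearity.
-/


noncomputable section

open scoped InnerProductSpace ComplexOrder

/-- The Hilbert space ℓ²(W) of square-summable complex functions on `W`. -/
abbrev l2 (W : Type*) := lp (fun _ : W => ℂ) 2

/-- The canonical orthonormal basis vector δ_w of ℓ²(W). -/
def delta {W : Type*} [DecidableEq W] (w : W) : l2 W := lp.single 2 w (1 : ℂ)

/-- Bounded operators on ℓ²(W). -/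
abbrev Op (W : Type*) := l2 W →L[ℂ] l2 W

/-- `q` is a multi-parameter: positive, and constant on conjugate simple reflections. -/
def IsMultiParam {B W : Type*} [Group W] {M : CoxeterMatrix B} (cs : CoxeterSystem M W)
    (q : B → ℝ) : Prop :=
  (∀ i, 0 < q i) ∧ ∀ i j, IsConj (cs.simple i) (cs.simple j) → q i = q j

/-- p_s(q) = (q_s - 1)/√(q_s). -/
def pparam {B : Type*} (q : B → ℝ) (i : B) : ℝ := (q i - 1) / Real.sqrt (q i)

/-- `T` is the family of Hecke operators (T_w^{(q)})_{w ∈ W} on ℓ²(W):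
`T 1 = 1`; `T s δ_w = δ_{sw}` if ℓ(sw) > ℓ(w); `T s δ_w = δ_{sw} + p_s(q) δ_w` if
ℓ(sw) < ℓ(w); and `T (s w) = T s * T w` whenever ℓ(sw) > ℓ(w). -/
def IsHeckeFamily {B W : Type*} [Group W] [DecidableEq W] {M : CoxeterMatrix B}
    (cs : CoxeterSystem M W) (q : B → ℝ) (T : W → Op W) : Prop :=
  T 1 = 1 ∧
  (∀ (i : B) (w : W), cs.length w < cs.length (cs.simple i * w) →
    T (cs.simple i) (delta w) = delta (cs.simple i * w)) ∧
  (∀ (i : B) (w : W), cs.length (cs.simple i * w) < cs.length w →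
    T (cs.simple i) (delta w) = delta (cs.simple i * w) + (pparam q i : ℂ) • delta w) ∧
  (∀ (i : B) (w : W), cs.length w < cs.length (cs.simple i * w) →
    T (cs.simple i * w) = T (cs.simple i) * T w)


open ContinuousLinearMap

theorem inner_delta_left {W : Type*} [DecidableEq W] (w : W) (f : l2 W) :
    ⟪delta w, f⟫_ℂ = f w := by
  simp [delta, lp.inner_single_left]

theorem delta_apply {W : Type*} [DecidableEq W] (w v : W) :
    (delta w : l2 W) v = if v = w then 1 else 0 := by
  simp [delta, lp.single_apply, Pi.single_apply]

section

variable {B W : Type*} [Group W] [DecidableEq W] {M : CoxeterMatrix B}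
  {cs : CoxeterSystem M W} {q : B → ℝ} {T : W → Op W}

theorem hecke_simple_delta (hT : IsHeckeFamily cs q T) (i : B) (w : W) :
    T (cs.simple i) (delta w) = delta (cs.simple i * w) +
      (if cs.length (cs.simple i * w) < cs.length w then (pparam q i : ℂ) else 0) • delta w := by
  split_ifs with h
  · exact hT.2.2.1 i w h
  · have := cs.length_simple_mul_ne w i
    rw [hT.2.1 i w (by omega), zero_smul, add_zero]

theorem hecke_simple_adjoint_delta (hT : IsHeckeFamily cs q T) (i : B) (v : W) :
    adjoint (T (cs.simple i)) (delta v) = T (cs.simple i) (delta v) := by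
  ext w
  rw [← inner_delta_left, adjoint_inner_right, hecke_simple_delta hT, hecke_simple_delta hT,
    inner_add_left, inner_smul_left, inner_delta_left, inner_delta_left]
  have h : cs.simple i * w = v ↔ w = cs.simple i * v := by
    constructor <;> rintro rfl <;> simp
  simp only [lp.coeFn_add, lp.coeFn_smul, Pi.add_apply, Pi.smul_apply, delta_apply, smul_eq_mul,
    h]
  by_cases hwv : w = v
  · subst hwv
    split_ifs <;> simp
  · simp [hwv]

/-- For a reduced word, `T` is multiplicative along its letters. -/
theorem hecke_wordProd (hT : IsHeckeFamily cs q T) (ω : List B) (hω : cs.IsReduced ω) :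
    T (cs.wordProd ω) = (ω.map fun i => T (cs.simple i)).prod := by
  induction ω with
  | nil => simpa using hT.1
  | cons i ω ih =>
    have h' : cs.IsReduced ω := by simpa using hω.drop 1
    have h1 : cs.length (cs.simple i * cs.wordProd ω) = ω.length + 1 := by
      simpa [cs.wordProd_cons] using hω.eq
    rw [cs.wordProd_cons, hT.2.2.2 i _ (by rw [h1, h'.eq]; omega), ih h', List.map_cons,
      List.prod_cons]

theorem hecke_delta_one (hT : IsHeckeFamily cs q T) (w : W) :
    T w (delta 1) = delta w := by
  obtain ⟨ω, hω, rfl⟩ := cs.exists_isReduced w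
  induction ω with
  | nil => simp [hT.1]
  | cons i ω ih =>
    have h' : cs.IsReduced ω := by simpa using hω.drop 1
    have h1 : cs.length (cs.simple i * cs.wordProd ω) = ω.length + 1 := by
      simpa [cs.wordProd_cons] using hω.eq
    have h2 : cs.length (cs.wordProd ω) < cs.length (cs.simple i * cs.wordProd ω) := by
      rw [h1, h'.eq]; omega
    rw [cs.wordProd_cons, hT.2.2.2 i _ h2, mul_def, comp_apply, ih h', hT.2.1 i _ h2]

theorem hecke_adjoint_delta_one (hT : IsHeckeFamily cs q T) (w : W) :
    adjoint (T w) (delta 1) = delta w⁻¹ := by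
  obtain ⟨ω, hω, rfl⟩ := cs.exists_isReduced w
  -- Peeling off the last letter exposes the outermost factor of the adjoint.
  induction ω using List.reverseRecOn with
  | nil =>
    rw [cs.wordProd_nil, hT.1, ← star_eq_adjoint, star_one, inv_one, one_apply_eq_self]
  | append_singleton ω i ih =>
    have h' : cs.IsReduced ω := by simpa using hω.take ω.length
    have h1 : cs.length (cs.simple i * (cs.wordProd ω)⁻¹) = ω.length + 1 := by
      rw [← cs.length_inv]
      simpa [cs.wordProd_append] using hω.eq
    have h2 : cs.length (cs.wordProd ω)⁻¹ < cs.length (cs.simple i * (cs.wordProd ω)⁻¹) := by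
      rw [h1, cs.length_inv, h'.eq]; omega
    have hmul : T (cs.wordProd (ω ++ [i])) = T (cs.wordProd ω) * T (cs.simple i) := by
      rw [hecke_wordProd hT _ hω, hecke_wordProd hT _ h']
      simp
    rw [hmul, ← star_eq_adjoint, star_mul, mul_def, comp_apply, star_eq_adjoint, star_eq_adjoint, ih h',
      hecke_simple_adjoint_delta hT, hT.2.1 i _ h2]
    simp [cs.wordProd_append]

/-- The trace of a product of two Hecke basis elements: `1` if they are mutually inverse in `W`,
and `0` otherwise. -/
theorem hecke_inner_mul (hT : IsHeckeFamily cs q T) (v w : W) :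
    ⟪(T v * T w) (delta (1 : W)), delta (1 : W)⟫_ℂ = if v * w = 1 then 1 else 0 := by
  rw [mul_def, comp_apply, ← adjoint_inner_right, hecke_adjoint_delta_one hT, hecke_delta_one hT,
    inner_delta_left, delta_apply]
  simp [eq_inv_iff_mul_eq_one, mul_eq_one_comm]

end

/-- τ_q is tracial on ℂ_q[W]: ⟨xy δ_e, δ_e⟩ = ⟨yx δ_e, δ_e⟩ for all
x, y in the linear span of the Hecke operators. -/
theorem heckeTrace_tracial {B W : Type*} [Fintype B] [Group W] [DecidableEq W]
    {M : CoxeterMatrix B} (cs : CoxeterSystem M W) (q : B → ℝ) (hq : IsMultiParam cs q)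
    (T : W → Op W) (hT : IsHeckeFamily cs q T) (x y : Op W)
    (hx : x ∈ Submodule.span ℂ (Set.range T)) (hy : y ∈ Submodule.span ℂ (Set.range T)) :
    ⟪(x * y) (delta (1 : W)), delta (1 : W)⟫_ℂ = ⟪(y * x) (delta (1 : W)), delta (1 : W)⟫_ℂ := by
  induction hx, hy using Submodule.span_induction₂ with
  | mem_mem x y hx hy =>
    obtain ⟨v, rfl⟩ := hx
    obtain ⟨w, rfl⟩ := hy
    rw [hecke_inner_mul hT, hecke_inner_mul hT]
    simp only [mul_eq_one_comm]
  | zero_left => simp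
  | zero_right => simp
  | add_left x y z _ _ _ h1 h2 => simp only [add_mul, mul_add, add_apply, inner_add_left, h1, h2]
  | add_right x y z _ _ _ h1 h2 => simp only [add_mul, mul_add, add_apply, inner_add_left, h1, h2]
  | smul_left r x y _ _ h =>
    simp only [smul_mul_assoc, mul_smul_comm, smul_apply, inner_smul_left, h]
  | smul_right r x y _ _ h =>
    simp only [smul_mul_assoc, mul_smul_comm, smul_apply, inner_smul_left, h]
end
end

section
/- Suppose W is δ-hyperbolic for some δ ≥ 0, i.e. ℓ(w₁⁻¹w₂) + ℓ(w₃⁻¹w₄) ≤ max{ℓ(w₁⁻¹w₃) + ℓ(w₂⁻¹w₄), ℓ(w₁⁻¹w₄) + ℓ(w₂⁻¹w₃)} + δ for all w₁, w₂, w₃, w₄ ∈ W. If v ≤ x and v′ ≤ x in the right weak Bruhat order, then ℓ(v⁻¹v′) ≤ |ℓ(v) − ℓ(v′)| + δ. -/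
/-!
Apply the four-point condition to `v, v', 1, x`. Since `v` and `v'` lie on geodesics from `1` to
`x`, i.e. `ℓ(v⁻¹x) = ℓ(x) - ℓ(v)` and likewise for `v'`, the two sums inside the maximum are
`ℓ(x) ± (ℓ(v) - ℓ(v'))`, so the maximum is `ℓ(x) + |ℓ(v) - ℓ(v')|`; cancelling `ℓ(x)` gives the
estimate.
-/

noncomputable section

/-- `v ≤ w` in the right weak Bruhat order: ℓ(v⁻¹w) = ℓ(w) − ℓ(v). -/
def WeakLE {B W : Type*} [Group W] {M : CoxeterMatrix B} (cs : CoxeterSystem M W)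
    (v w : W) : Prop :=
  cs.length v + cs.length (v⁻¹ * w) = cs.length w

/-- If `W` is δ-hyperbolic (four-point condition) and v ≤ x, v′ ≤ x in
the right weak Bruhat order, then ℓ(v⁻¹v′) ≤ |ℓ(v) − ℓ(v′)| + δ. -/
theorem hyperbolic_weak_order_estimate {B W : Type*} [Fintype B] [Group W]
    {M : CoxeterMatrix B} (cs : CoxeterSystem M W) (δ : ℝ) (hδ : 0 ≤ δ)
    (hyp : ∀ w₁ w₂ w₃ w₄ : W,
      (cs.length (w₁⁻¹ * w₂) : ℝ) + (cs.length (w₃⁻¹ * w₄) : ℝ) ≤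
        max ((cs.length (w₁⁻¹ * w₃) : ℝ) + (cs.length (w₂⁻¹ * w₄) : ℝ))
            ((cs.length (w₁⁻¹ * w₄) : ℝ) + (cs.length (w₂⁻¹ * w₃) : ℝ)) + δ)
    (x v v' : W) (hv : WeakLE cs v x) (hv' : WeakLE cs v' x) :
    (cs.length (v⁻¹ * v') : ℝ) ≤ |(cs.length v : ℝ) - (cs.length v' : ℝ)| + δ := by
  have h := hyp v v' 1 x
  simp only [mul_one, inv_one, one_mul, cs.length_inv] at h
  have e : (cs.length v : ℝ) + cs.length (v⁻¹ * x) = cs.length x := by exact_mod_cast hv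
  have e' : (cs.length v' : ℝ) + cs.length (v'⁻¹ * x) = cs.length x := by exact_mod_cast hv'
  have hmax : max ((cs.length v : ℝ) + cs.length (v'⁻¹ * x))
      ((cs.length (v⁻¹ * x) : ℝ) + cs.length v') ≤
        cs.length x + |(cs.length v : ℝ) - cs.length v'| := by
    apply max_le
    · linarith [le_abs_self ((cs.length v : ℝ) - cs.length v')]
    · linarith [neg_abs_le ((cs.length v : ℝ) - cs.length v')]
  linarith
end
end

section
/- Suppose Γ contains no induced square. For i ∈ ℕ and x, y ∈ W, let R_{x,y}(i) be the number of tuples (u, Γ₁, v₁, v₂, Γ₂, w₁, w₂) with u, v₁, v₂, w₁, w₂ ∈ W and Γ₁, Γ₂ cliques of Γ such that: x = v₁ V(Γ₁) v₂; y = (w₁w₂)⁻¹ u; v₁ ≤ u and w₁ ≤ u in the right weak Bruhat order; ℓ(u) = i; 2ℓ(v₁) = i + ℓ(x) − ℓ(y) − #VΓ₁; 2ℓ(v₂) = 2ℓ(x) − (i + ℓ(x) − ℓ(y) + #VΓ₁); 2ℓ(w₁) = i + ℓ(x) − ℓ(y) − #VΓ₂; and 2ℓ(w₂) = 2ℓ(x)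 − (i + ℓ(x) − ℓ(y) + #VΓ₂). Then there exists a constant K > 0 such that R_{x,y}(i) ≤ K for all i ∈ ℕ and all x, y ∈ W. -/
/-! The proof rests on one geometric fact: in a right-angled Coxeter group whose graph has no
induced square, two elements `v, v'` lying below a common `u` in the right weak order whose lengths
differ by at most `D` satisfy `ℓ(v⁻¹v') ≤ 2|S| + D` (`length_inv_mul_le`). Indeed, after cancelling
common left descents, every letter of `v` commutes with, and differs from, every letter of `v'`
(`letters_commute`). Were neither support a clique, two nonadjacent letters from each would form an
induced square; so one of `v, v'` has length at most `|S|`, and the other has length at most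
`|S| + D`.

For a tuple counted by `R_{x,y}(i)` the length conditions say that `v₁ ≤ x`, `v₂⁻¹ ≤ x⁻¹`,
`(w₁⁻¹u)⁻¹ ≤ y⁻¹`, besides `v₁, w₁ ≤ u`, with all lengths prescribed up to an error of at most
`|S|/2`. Hence, relative to one fixed tuple, a tuple is determined by its two cliques and
four elements of the ball of radius `3|S|`.

The exchange condition and the fact that two distinct left descents commute
(`descents_commute`) are obtained from the affine action of `W` on functions `W → ZMod 2`, in which
`s` sends `F` to `g ↦ [g = s] + F(sgs)`. The orbit of `0` records the left inversion sets: for a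
reflection `t`, the value at `t` of the image of `0` under `w` is `1` exactly when `t` is a left
inversion of `w`. If `s, t` generate an infinite dihedral group, its reflections are
`s(ts)^j` for `j ∈ ℤ`, and those which are inversions of a given `w` are indexed by an interval
`[0,k)` or `[k,0)` (`exists_interval`), so `s` (`j = 0`) and `t` (`j = -1`) are never both
inversions. -/

noncomputable section

/-- The Coxeter system is right-angled: all off-diagonal exponents are 2 or ∞ (coded 0). -/
def RightAngled {B : Type*} (Mx : CoxeterMatrix B) : Prop :=
  ∀ i j, i ≠ j → Mx i j = 2 ∨ Mx i j = 0

/-- The graph Γ (vertices S, edges where m = 2) contains an induced square. -/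
def HasInducedSquare {B : Type*} (Mx : CoxeterMatrix B) : Prop :=
  ∃ s₁ s₂ s₃ s₄ : B, Mx s₁ s₂ = 2 ∧ Mx s₂ s₃ = 2 ∧ Mx s₃ s₄ = 2 ∧ Mx s₄ s₁ = 2 ∧
    Mx s₁ s₃ = 0 ∧ Mx s₂ s₄ = 0

/-- `F` is (the vertex set of) a clique of the graph Γ. -/
def IsMClique {B : Type*} (Mx : CoxeterMatrix B) (F : Finset B) : Prop :=
  ∀ i ∈ F, ∀ j ∈ F, i ≠ j → Mx i j = 2

/-- `g = V(Γ₀)`, the product of the (pairwise commuting) simple reflections of the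
clique with vertex set `F`. -/
def CliqueProd {B W : Type*} [DecidableEq B] [Group W] {M : CoxeterMatrix B} (cs : CoxeterSystem M W)
    (F : Finset B) (g : W) : Prop :=
  ∃ l : List B, l.Nodup ∧ l.toFinset = F ∧ g = (l.map cs.simple).prod

/-- The condition defining the tuples (u, Γ₁, v₁, v₂, Γ₂, w₁, w₂) counted by R_{x,y}(i). -/
def TupleCond {B W : Type*} [DecidableEq B] [Group W] (M : CoxeterMatrix B) (cs : CoxeterSystem M W)
    (i : ℕ) (x y : W) (p : W × Finset B × W × W × Finset B × W × W) : Prop :=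
  match p with
  | (u, Γ₁, v₁, v₂, Γ₂, w₁, w₂) =>
    IsMClique M Γ₁ ∧ IsMClique M Γ₂ ∧
    (∃ g : W, CliqueProd cs Γ₁ g ∧ x = v₁ * g * v₂) ∧
    y = (w₁ * w₂)⁻¹ * u ∧
    WeakLE cs v₁ u ∧ WeakLE cs w₁ u ∧
    cs.length u = i ∧
    2 * (cs.length v₁ : ℤ) =
      (i : ℤ) + (cs.length x : ℤ) - (cs.length y : ℤ) - (Γ₁.card : ℤ) ∧
    2 * (cs.length v₂ : ℤ) =
      2 * (cs.length x : ℤ) - ((i : ℤ) + (cs.length x : ℤ) - (cs.length y : ℤ) + (Γ₁.card : ℤ)) ∧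
    2 * (cs.length w₁ : ℤ) =
      (i : ℤ) + (cs.length x : ℤ) - (cs.length y : ℤ) - (Γ₂.card : ℤ) ∧
    2 * (cs.length w₂ : ℤ) =
      2 * (cs.length x : ℤ) - ((i : ℤ) + (cs.length x : ℤ) - (cs.length y : ℤ) + (Γ₂.card : ℤ))

namespace RACG

open CoxeterSystem

variable {B W : Type*} [Group W] {M : CoxeterMatrix B} (cs : CoxeterSystem M W)

/-! ### The inversion cocycle -/

open Classical in
/-- The affine action of a simple reflection on functions `W → ZMod 2`. -/
def step (i : B) : Function.End (W → ZMod 2) :=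
  fun F g => (if g = cs.simple i then 1 else 0) + F (cs.simple i * g * cs.simple i)

lemma matrix_eq_one_or {M : CoxeterMatrix B} (hra : RightAngled M) (i j : B) :
    (i = j ∧ M i j = 1) ∨ (i ≠ j ∧ M i j = 2) ∨ (i ≠ j ∧ M i j = 0) := by
  by_cases h : i = j
  · subst h; simp
  · rcases hra i j h with h' | h' <;> simp [h, h']

lemma simple_comm {i j : B} (h : M i j = 2) :
    cs.simple i * cs.simple j = cs.simple j * cs.simple i := by
  have h1 := cs.simple_mul_simple_pow i j
  rw [h, pow_two] at h1
  have h2 := eq_inv_of_mul_eq_one_left h1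
  simpa using h2

lemma conj_eq_iff {a g h : W} (ha : a * a = 1) : a * g * a = h ↔ g = a * h * a := by
  have hi : a⁻¹ = a := inv_eq_of_mul_eq_one_left ha
  constructor
  · rintro rfl
    calc g = a⁻¹ * (a * g * a) * a⁻¹ := by group
      _ = _ := by rw [hi]
  · rintro rfl
    calc a * (a * h * a) * a = a * (a⁻¹ * h * a⁻¹) * a := by rw [hi]
      _ = h := by group

open Classical in
lemma step_liftable (hra : RightAngled M) : M.IsLiftable (step cs) := by
  intro i j
  rcases matrix_eq_one_or hra i j with ⟨rfl, h⟩ | ⟨-, h⟩ | ⟨-, h⟩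
  · rw [h, pow_one]
    funext F g
    have e : cs.simple i * g * cs.simple i = cs.simple i ↔ g = cs.simple i := by
      rw [conj_eq_iff (cs.simple_mul_simple_self i)]; simp
    change step cs i (step cs i F) g = F g
    simp only [step, e]
    rw [← add_assoc, CharTwo.add_self_eq_zero, zero_add]
    congr 1
    simp [mul_assoc]
  · rw [h, pow_two]
    have hc := simple_comm cs h
    funext F g
    set s := cs.simple i with hs
    set t := cs.simple j with ht
    have hss : s * s = 1 := cs.simple_mul_simple_self i
    have htt : t * t = 1 := cs.simple_mul_simple_self j
    have hsi : s⁻¹ = s := cs.inv_simple i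
    have hti : t⁻¹ = t := cs.inv_simple j
    have hst : s * t * s = t := by rw [hc, mul_assoc, hss, mul_one]
    have hts : t * s * t = s := by rw [← hc, mul_assoc, htt, mul_one]
    have e1 : s * g * s = t ↔ g = t := by rw [conj_eq_iff hss, hst]
    have e2 : t * (s * g * s) * t = s ↔ g = s := by
      rw [conj_eq_iff htt, conj_eq_iff hss, hts, hss, one_mul]
    have e3 : s * (t * (s * g * s) * t) * s = t * g * t := by
      have : s * (t * (s * g * s) * t) * s = (s * t * s) * g * (s * t * s) := by group
      rw [this, hst]
    have e4 : t * g * t = t ↔ g = t := by rw [conj_eq_iff htt, htt, one_mul]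
    change step cs i (step cs j (step cs i (step cs j F))) g = F g
    simp only [step, ← hs, ← ht, e1, e2, e3, e4]
    have e5 : t * (t * g * t) * t = g := by
      calc _ = (t * t) * g * (t * t) := by group
        _ = g := by rw [htt, one_mul, mul_one]
    rw [e5]
    generalize (if g = s then (1 : ZMod 2) else 0) = a
    generalize (if g = t then (1 : ZMod 2) else 0) = b
    have : a + (b + (a + (b + F g))) = (a + a) + (b + b) + F g := by ring
    rw [this]; simp [CharTwo.add_self_eq_zero]
  · rw [h, pow_zero]

/-- `inv cs hra w t` is `1` when `t` occurs an odd number of times in the left inversion sequence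
of some (equivalently any) word for `w`, and `0` otherwise. -/
def inv (hra : RightAngled M) (w : W) : W → ZMod 2 :=
  cs.lift ⟨step cs, step_liftable cs hra⟩ w (fun _ => 0)

lemma inv_one (hra : RightAngled M) (t : W) : inv cs hra 1 t = 0 := by
  simp only [inv, map_one]; rfl

open Classical in
lemma inv_simple_mul (hra : RightAngled M) (i : B) (w t : W) :
    inv cs hra (cs.simple i * w) t =
      (if t = cs.simple i then 1 else 0) + inv cs hra w (cs.simple i * t * cs.simple i) := by
  simp only [inv, map_mul, cs.lift_apply_simple (step_liftable cs hra)]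
  rfl

/-- The exchange condition. -/
lemma exchange (hra : RightAngled M) (l : List B) (t : W)
    (h : inv cs hra (cs.wordProd l) t = 1) :
    ∃ l' : List B, l'.length + 1 = l.length ∧ t * cs.wordProd l = cs.wordProd l' := by
  induction l generalizing t with
  | nil => simp [inv_one] at h
  | cons i l ih =>
    rw [wordProd_cons, inv_simple_mul] at h
    by_cases ht : t = cs.simple i
    · exact ⟨l, by simp, by simp [ht, wordProd_cons]⟩
    · rw [if_neg ht, zero_add] at h
      obtain ⟨l', h1, h2⟩ := ih _ h
      refine ⟨i :: l', by simp [h1], ?_⟩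
      rw [wordProd_cons, wordProd_cons, ← h2]
      simp [← mul_assoc]

lemma length_mul_lt (hra : RightAngled M) {w t : W} (h : inv cs hra w t = 1) :
    cs.length (t * w) < cs.length w := by
  obtain ⟨l, hl, rfl⟩ := cs.exists_isReduced w
  obtain ⟨l', h1, h2⟩ := exchange cs hra l t h
  rw [h2, hl.eq]
  have := cs.length_wordProd_le l'
  omega

lemma zmod_two_cases (a : ZMod 2) : a = 0 ∨ a = 1 := by
  revert a; decide

lemma isLeftDescent_iff_inv (hra : RightAngled M) {w : W} {i : B} :
    cs.IsLeftDescent w i ↔ inv cs hra w (cs.simple i) = 1 := by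
  constructor
  · intro h
    rcases zmod_two_cases (inv cs hra w (cs.simple i)) with h0 | h1
    · have : inv cs hra (cs.simple i * w) (cs.simple i) = 1 := by
        rw [inv_simple_mul]; simp [h0]
      have := length_mul_lt cs hra this
      rw [simple_mul_simple_cancel_left] at this
      unfold IsLeftDescent at h
      omega
    · exact h1
  · exact fun h => length_mul_lt cs hra h

/-! ### Distinct left descents commute -/

lemma simple_ne (hra : RightAngled M) {i j : B} (hij : i ≠ j) : cs.simple i ≠ cs.simple j := by
  classical
  -- The homomorphism to `ZMod 2` counting occurrences of `i` separates the two.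
  let f : B → Multiplicative (ZMod 2) := fun a => Multiplicative.ofAdd (if a = i then 1 else 0)
  have hsq : ∀ z : Multiplicative (ZMod 2), z * z = 1 := by decide
  have hf : M.IsLiftable f := by
    intro a b
    rcases matrix_eq_one_or hra a b with ⟨rfl, h⟩ | ⟨-, h⟩ | ⟨-, h⟩
    · rw [h, pow_one, hsq]
    · rw [h, pow_two, hsq]
    · rw [h, pow_zero]
  intro h
  have := congrArg (cs.lift ⟨f, hf⟩) h
  rw [cs.lift_apply_simple hf, cs.lift_apply_simple hf] at this
  simp [f, hij.symm] at this

/-- If `m_{s,t} = ∞` then `ts` has infinite order. -/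
lemma eq_zero_of_zpow_eq_one (hra : RightAngled M) {i j : B} (hij : M i j = 0) {k : ℤ}
    (h : (cs.simple j * cs.simple i) ^ k = 1) : k = 0 := by
  classical
  have hne : i ≠ j := by rintro rfl; simp at hij
  -- Map `i` and `j` to the reflections `x ↦ -x` and `x ↦ 1 - x` of `ℤ` and kill the rest.
  let f : B → Equiv.Perm ℤ := fun a =>
    if a = i then Equiv.subLeft 0 else if a = j then Equiv.subLeft 1 else 1
  have hinv : ∀ a, f a * f a = 1 := by
    intro a
    ext x
    simp only [f]
    split_ifs <;> simp
  have hf : M.IsLiftable f := by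
    intro a b
    rcases matrix_eq_one_or hra a b with ⟨rfl, h⟩ | ⟨hab, h⟩ | ⟨-, h⟩
    · rw [h, pow_one, hinv]
    · rw [h, pow_two]
      by_cases ha : a = i ∨ a = j
      · by_cases hb : b = i ∨ b = j
        · have hji : M j i = 0 := by rw [M.symmetric]; exact hij
          rcases ha with rfl | rfl <;> rcases hb with rfl | rfl <;> simp_all
        · have : f b = 1 := by
            simp only [not_or] at hb
            simp [f, hb.1, hb.2]
          simp [this, hinv]
      · have : f a = 1 := by
          simp only [not_or] at ha
          simp [f, ha.1, ha.2]
        simp [this, hinv]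
    · rw [h, pow_zero]
  have h1 := congrArg (cs.lift ⟨f, hf⟩) h
  rw [map_zpow, map_mul, cs.lift_apply_simple hf, cs.lift_apply_simple hf, map_one] at h1
  have h2 : f j * f i = Equiv.addLeft (1 : ℤ) := by
    ext x
    simp [f, hne.symm]
  rw [h2] at h1
  have h3 : ∀ k : ℤ, ((Equiv.addLeft (1 : ℤ)) ^ k : Equiv.Perm ℤ) 0 = k := by
    intro k
    induction k with
    | zero => simp
    | succ n ih => rw [add_comm, zpow_add, zpow_one, Equiv.Perm.mul_apply, ih]; simp
    | pred n ih =>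
      rw [sub_eq_add_neg, add_comm, zpow_add, zpow_neg_one, Equiv.Perm.mul_apply, ih,
        Equiv.Perm.inv_eq_iff_eq]
      simp
  rw [← h3 k, h1]
  rfl

/-- The reflection `s(ts)^k` of the dihedral group generated by `s = s_i` and `t = s_j`; the values
`k = 0` and `k = -1` give `s` and `t`. -/
def dref (i j : B) (k : ℤ) : W := cs.simple i * (cs.simple j * cs.simple i) ^ k

lemma inv_ts (i j : B) :
    (cs.simple j * cs.simple i)⁻¹ = cs.simple i * cs.simple j := by simp

lemma dref_zero (i j : B) : dref cs i j 0 = cs.simple i := by simp [dref]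

lemma dref_neg_one (i j : B) : dref cs i j (-1) = cs.simple j := by
  simp [dref]

lemma dref_inj (hra : RightAngled M) {i j : B} (hij : M i j = 0) {k l : ℤ} :
    dref cs i j k = dref cs i j l ↔ k = l := by
  constructor
  · intro h
    have h1 := mul_left_cancel h
    have : (cs.simple j * cs.simple i) ^ (k - l) = 1 := by
      rw [zpow_sub, h1, mul_inv_cancel]
    have := eq_zero_of_zpow_eq_one cs hra hij this
    omega
  · rintro rfl; rfl

lemma conj_i_dref (i j : B) (k : ℤ) :
    cs.simple i * dref cs i j k * cs.simple i = dref cs i j (-k) := by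
  unfold dref
  rw [simple_mul_simple_cancel_left, zpow_neg, ← inv_zpow, inv_ts]
  have h : cs.simple i * cs.simple j =
      cs.simple i * (cs.simple j * cs.simple i) * (cs.simple i)⁻¹ := by simp [mul_assoc]
  rw [h, conj_zpow]
  simp [mul_assoc]

lemma conj_j_dref (i j : B) (k : ℤ) :
    cs.simple j * dref cs i j k * cs.simple j = dref cs i j (-2 - k) := by
  have h1 : cs.simple j * dref cs i j k * cs.simple j
      = (cs.simple j * cs.simple i) ^ (k + 2) * cs.simple i := by
    unfold dref
    rw [← mul_assoc, show k + 2 = 1 + k + 1 by ring, zpow_add, zpow_add, zpow_one]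
    simp [mul_assoc]
  have h2 := conj_i_dref cs i j (k + 2)
  rw [h1, show -2 - k = -(k + 2) by ring, ← h2]
  simp [dref]

/-- The reflections of the infinite dihedral group generated by `s_i, s_j` which are inversions of
`w` are indexed by the integers from `0` to `k`, for some `k`. -/
def IsIntv (hra : RightAngled M) (i j : B) (w : W) : Prop :=
  ∃ k : ℤ, ∀ l : ℤ, inv cs hra w (dref cs i j l) = 1 ↔ (0 ≤ l ∧ l < k) ∨ (k ≤ l ∧ l < 0)

open Classical in
lemma isIntv_i (hra : RightAngled M) {i j : B} (hij : M i j = 0) {w : W}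
    (h : IsIntv cs hra i j w) : IsIntv cs hra i j (cs.simple i * w) := by
  obtain ⟨k, hk⟩ := h
  refine ⟨1 - k, fun l => ?_⟩
  rw [inv_simple_mul, conj_i_dref]
  have e : dref cs i j l = cs.simple i ↔ l = 0 := by
    rw [← dref_zero cs i j, dref_inj cs hra hij]
  rw [e]
  have hl := hk (-l)
  split_ifs with h0
  · rcases zmod_two_cases (inv cs hra w (dref cs i j (-l))) with h | h <;> rw [h] at hl ⊢ <;>
      simp at hl ⊢ <;> omega
  · rw [zero_add, hl]; omega

open Classical in
lemma isIntv_j (hra : RightAngled M) {i j : B} (hij : M i j = 0) {w : W}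
    (h : IsIntv cs hra i j w) : IsIntv cs hra i j (cs.simple j * w) := by
  obtain ⟨k, hk⟩ := h
  refine ⟨-1 - k, fun l => ?_⟩
  rw [inv_simple_mul, conj_j_dref]
  have e : dref cs i j l = cs.simple j ↔ l = -1 := by
    rw [← dref_neg_one cs i j, dref_inj cs hra hij]
  rw [e]
  have hl := hk (-2 - l)
  split_ifs with h0
  · rcases zmod_two_cases (inv cs hra w (dref cs i j (-2 - l))) with h | h <;> rw [h] at hl ⊢ <;>
      simp at hl ⊢ <;> omega
  · rw [zero_add, hl]; omega

lemma isIntv_dref (hra : RightAngled M) {i j : B} (hij : M i j = 0) (k : ℤ) {w : W}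
    (h : IsIntv cs hra i j w) : IsIntv cs hra i j (dref cs i j k * w) := by
  unfold dref
  rw [mul_assoc]
  apply isIntv_i cs hra hij
  induction k with
  | zero => simpa using h
  | succ n ih =>
    rw [add_comm, zpow_add, zpow_one, mul_assoc, mul_assoc]
    exact isIntv_j cs hra hij (isIntv_i cs hra hij ih)
  | pred n ih =>
    rw [sub_eq_add_neg, add_comm, zpow_add, zpow_neg_one, inv_ts, mul_assoc, mul_assoc]
    exact isIntv_i cs hra hij (isIntv_j cs hra hij ih)

/-- Induction on length: an element of minimal length in its coset of the dihedral group has no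
inversion there, and the interval property passes to the whole coset. -/
lemma exists_interval (hra : RightAngled M) {i j : B} (hij : M i j = 0) (w : W) :
    IsIntv cs hra i j w := by
  induction hn : cs.length w using Nat.strong_induction_on generalizing w with
  | _ n ih =>
    by_cases h : ∃ l, inv cs hra w (dref cs i j l) = 1
    · obtain ⟨l, hl⟩ := h
      have h1 := ih _ (hn ▸ length_mul_lt cs hra hl) _ rfl
      have h2 := isIntv_dref cs hra hij l h1
      have h3 : dref cs i j l * dref cs i j l = 1 := by
        have h4 := conj_i_dref cs i j l
        unfold dref at h4 ⊢
        rw [simple_mul_simple_cancel_left] at h4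
        rw [mul_assoc, ← mul_assoc _ (cs.simple i), h4, mul_assoc, simple_mul_simple_cancel_left,
          ← zpow_add, neg_add_cancel, zpow_zero]
      rwa [← mul_assoc, h3, one_mul] at h2
    · push Not at h
      refine ⟨0, fun l => ?_⟩
      simp only [h l, false_iff]
      omega

/-- Two distinct left descents commute, and can be removed one after the other. -/
lemma descents_commute (hra : RightAngled M) {i j : B} (hne : i ≠ j) {w : W}
    (hi : cs.IsLeftDescent w i) (hj : cs.IsLeftDescent w j) :
    M i j = 2 ∧ cs.IsLeftDescent (cs.simple j * w) i := by
  have h2 : M i j = 2 := by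
    rcases hra i j hne with h | h
    · exact h
    · obtain ⟨k, hk⟩ := exists_interval cs hra h w
      have h0 := hk 0
      have h1 := hk (-1)
      rw [dref_zero, ← isLeftDescent_iff_inv] at h0
      rw [dref_neg_one, ← isLeftDescent_iff_inv] at h1
      have := h0.1 hi
      have := h1.1 hj
      omega
  refine ⟨h2, ?_⟩
  rw [isLeftDescent_iff_inv cs hra] at hi ⊢
  rw [inv_simple_mul, if_neg (simple_ne cs hra hne), zero_add, ← simple_comm cs h2,
    simple_mul_simple_cancel_right]
  exact hi

/-! ### Elements with a common upper bound in the weak order -/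

lemma weakLE_simple_mul {q u : W} {i : B} (hd : cs.IsLeftDescent q i) (h : WeakLE cs q u) :
    cs.IsLeftDescent u i ∧ WeakLE cs (cs.simple i * q) (cs.simple i * u) := by
  rw [isLeftDescent_iff] at *
  unfold WeakLE at *
  have e : (cs.simple i * q)⁻¹ * (cs.simple i * u) = q⁻¹ * u := by group
  have h1 := cs.length_mul_le (cs.simple i * q) (q⁻¹ * u)
  rw [mul_assoc, mul_inv_cancel_left] at h1
  rw [e]
  have := cs.length_simple_mul u i
  omega

lemma not_isLeftDescent_simple_mul {i j : B} (h : M i j = 2) {w : W} (hi : ¬ cs.IsLeftDescent w i)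
    (hj : cs.IsLeftDescent w j) : ¬ cs.IsLeftDescent (cs.simple j * w) i := by
  rw [isLeftDescent_iff] at *
  have h1 : cs.simple i * (cs.simple j * w) = cs.simple j * (cs.simple i * w) := by
    rw [← mul_assoc, simple_comm cs h, mul_assoc]
  rw [h1]
  have := cs.length_simple_mul w i
  have := cs.length_simple_mul (cs.simple i * w) j
  omega

lemma isReduced_cons {a : B} {l : List B} (h : cs.IsReduced (a :: l)) :
    cs.IsReduced l ∧ cs.IsLeftDescent (cs.wordProd (a :: l)) a ∧
      cs.simple a * cs.wordProd (a :: l) = cs.wordProd l := by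
  have h1 : cs.IsReduced l := by simpa using h.drop 1
  have h2 : cs.simple a * cs.wordProd (a :: l) = cs.wordProd l := by simp [wordProd_cons]
  refine ⟨h1, ?_, h2⟩
  rw [IsLeftDescent, h2, h1.eq, h.eq]
  simp

/-- A left descent of `u` that is not one of `q ≤ u` commutes with every letter of `q`, and may be
removed from `u` without losing `q`. -/
lemma commute_of_not_descent (hra : RightAngled M) {i : B} (l : List B) (u : W)
    (hl : cs.IsReduced l) (hle : WeakLE cs (cs.wordProd l) u) (hu : cs.IsLeftDescent u i)
    (hn : ¬ cs.IsLeftDescent (cs.wordProd l) i) :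
    (∀ a ∈ l, M i a = 2) ∧ WeakLE cs (cs.wordProd l) (cs.simple i * u) := by
  induction l generalizing u with
  | nil => simp [WeakLE]
  | cons t l ih =>
    obtain ⟨hr, hd, he⟩ := isReduced_cons cs hl
    obtain ⟨hut, hle'⟩ := weakLE_simple_mul cs hd hle
    have hne : i ≠ t := by rintro rfl; exact hn hd
    obtain ⟨h2, hui⟩ := descents_commute cs hra hne hu hut
    have hn' := not_isLeftDescent_simple_mul cs h2 hn hd
    rw [he] at hle' hn'
    obtain ⟨ih1, ih2⟩ := ih _ hr hle' hui hn'
    refine ⟨by simpa [h2] using ih1, ?_⟩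
    have hc := simple_comm cs h2
    unfold WeakLE at *
    have e : (cs.wordProd (t :: l))⁻¹ * (cs.simple i * u)
        = (cs.wordProd l)⁻¹ * (cs.simple i * (cs.simple t * u)) := by
      rw [← mul_assoc (cs.simple i), hc, wordProd_cons]
      simp [mul_assoc]
    rw [e]
    rw [isLeftDescent_iff] at *
    rw [he] at hd
    omega

lemma letters_commute (hra : RightAngled M) (p q : List B) (u : W)
    (hp : cs.IsReduced p) (hq : cs.IsReduced q) (hpu : WeakLE cs (cs.wordProd p) u)
    (hqu : WeakLE cs (cs.wordProd q) u)
    (hn : ∀ i, cs.IsLeftDescent (cs.wordProd p) i → ¬ cs.IsLeftDescent (cs.wordProd q) i) :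
    ∀ a ∈ p, ∀ b ∈ q, M a b = 2 := by
  induction p generalizing u with
  | nil => simp
  | cons s p ih =>
    obtain ⟨hr, hd, he⟩ := isReduced_cons cs hp
    obtain ⟨hus, hle'⟩ := weakLE_simple_mul cs hd hpu
    rw [he] at hle'
    obtain ⟨h1, h2⟩ := commute_of_not_descent cs hra q u hq hqu hus (hn s hd)
    have := ih _ hr hle' h2 ?_
    · intro a ha
      rcases List.mem_cons.1 ha with rfl | ha
      · exact h1
      · exact this a ha
    · intro i hi hiq
      by_cases hip : cs.IsLeftDescent (cs.wordProd (s :: p)) i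
      · exact hn i hip hiq
      -- As `i` is a left descent of `π q ≤ u`, it is one of `u`, hence commutes with `s`.
      · have hui := (weakLE_simple_mul cs hiq hqu).1
        have hne : i ≠ s := by rintro rfl; exact hip hd
        have hc := (descents_commute cs hra hne hui hus).1
        have := not_isLeftDescent_simple_mul cs hc hip hd
        rw [he] at this
        exact this hi

lemma exists_nodup (l : List B) (h : ∀ a ∈ l, ∀ b ∈ l, a ≠ b → M a b = 2) :
    ∃ l' : List B, l'.Nodup ∧ l' ⊆ l ∧ cs.wordProd l' = cs.wordProd l := by
  classical
  induction l with
  | nil => exact ⟨[], by simp⟩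
  | cons a l ih =>
    obtain ⟨l', h1, h2, h3⟩ := ih fun x hx y hy =>
      h x (List.mem_cons_of_mem _ hx) y (List.mem_cons_of_mem _ hy)
    by_cases ha : a ∈ l'
    · refine ⟨l'.erase a, h1.erase a, fun x hx => ?_, ?_⟩
      · exact List.mem_cons_of_mem _ (h2 (List.mem_of_mem_erase hx))
      · have hp : cs.wordProd l' = cs.wordProd (a :: l'.erase a) := by
          apply List.Perm.prod_eq'
          · exact (List.perm_cons_erase ha).map _
          · rw [List.pairwise_map]
            refine List.Pairwise.imp_of_mem ?_ h1
            intro x y hx hy hxy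
            exact simple_comm cs (h x (List.mem_cons_of_mem _ (h2 hx)) y
              (List.mem_cons_of_mem _ (h2 hy)) hxy)
        rw [wordProd_cons, ← h3, hp, wordProd_cons, simple_mul_simple_cancel_left]
    · refine ⟨a :: l', by simp [ha, h1], ?_, ?_⟩
      · exact List.cons_subset_cons _ h2
      · rw [wordProd_cons, wordProd_cons, h3]

lemma length_le_of_clique [Fintype B] (l : List B)
    (h : ∀ a ∈ l, ∀ b ∈ l, a ≠ b → M a b = 2) : cs.length (cs.wordProd l) ≤ Fintype.card B := by
  obtain ⟨l', h1, -, h3⟩ := exists_nodup cs l h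
  rw [← h3]
  exact (cs.length_wordProd_le l').trans h1.length_le_card

/-- Elements of similar length below a common bound are close to each other. -/
lemma length_inv_mul_le [Fintype B] (hra : RightAngled M) (hsq : ¬ HasInducedSquare M) (D : ℕ)
    (v v' u : W) (hv : WeakLE cs v u) (hv' : WeakLE cs v' u)
    (h1 : cs.length v ≤ cs.length v' + D) (h2 : cs.length v' ≤ cs.length v + D) :
    cs.length (v⁻¹ * v') ≤ 2 * Fintype.card B + D := by
  induction hn : cs.length v using Nat.strong_induction_on generalizing v v' u with
  | _ n ih =>
    by_cases hc : ∃ i, cs.IsLeftDescent v i ∧ cs.IsLeftDescent v' i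
    · obtain ⟨i, hi, hi'⟩ := hc
      have hw := (weakLE_simple_mul cs hi hv).2
      have hw' := (weakLE_simple_mul cs hi' hv').2
      have e : (cs.simple i * v)⁻¹ * (cs.simple i * v') = v⁻¹ * v' := by group
      rw [← e]
      rw [isLeftDescent_iff] at hi hi'
      exact ih _ (by omega) _ _ _ hw hw' (by omega) (by omega) rfl
    · push Not at hc
      obtain ⟨p, hp, rfl⟩ := cs.exists_isReduced v
      obtain ⟨q, hq, rfl⟩ := cs.exists_isReduced v'
      have hcom := letters_commute cs hra p q u hp hq hv hv' hc
      have hle := cs.length_mul_le (cs.wordProd p)⁻¹ (cs.wordProd q)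
      rw [length_inv] at hle
      by_cases hpc : ∀ a ∈ p, ∀ b ∈ p, a ≠ b → M a b = 2
      · have := length_le_of_clique cs p hpc
        omega
      · by_cases hqc : ∀ a ∈ q, ∀ b ∈ q, a ≠ b → M a b = 2
        · have := length_le_of_clique cs q hqc
          omega
        · push Not at hpc hqc
          obtain ⟨a, ha, c, hc1, hac, hac2⟩ := hpc
          obtain ⟨b, hb, d, hd1, hbd, hbd2⟩ := hqc
          refine absurd ⟨a, b, c, d, hcom a ha b hb, ?_, hcom c hc1 d hd1, ?_,
            (hra a c hac).resolve_left hac2, (hra b d hbd).resolve_left hbd2⟩ hsq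
          · rw [M.symmetric]; exact hcom c hc1 b hb
          · rw [M.symmetric]; exact hcom a ha d hd1

/-! ### Counting the tuples -/

lemma finite_ball [Fintype B] (R : ℕ) : {w : W | cs.length w ≤ R}.Finite := by
  refine ((List.finite_length_le B R).image cs.wordProd).subset ?_
  intro w hw
  obtain ⟨l, hl, rfl⟩ := cs.exists_isReduced w
  exact ⟨l, by simpa [hl.eq] using hw, rfl⟩

/-- The length conditions make the factorisations `x = v₁ · V(Γ₁) · v₂` and `y = w₂⁻¹ · (w₁⁻¹u)`
reduced, which is expressed through the weak order. -/
lemma tuple_facts [DecidableEq B] {i : ℕ} {x y u v₁ v₂ w₁ w₂ : W} {Γ₁ Γ₂ : Finset B}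
    (h : TupleCond M cs i x y (u, Γ₁, v₁, v₂, Γ₂, w₁, w₂)) :
    WeakLE cs v₁ u ∧ WeakLE cs w₁ u ∧ WeakLE cs v₁ x ∧ WeakLE cs v₂⁻¹ x⁻¹ ∧
    WeakLE cs (w₁⁻¹ * u)⁻¹ y⁻¹ := by
  obtain ⟨-, -, ⟨g, ⟨l, hl, hlF, hg⟩, hx⟩, hy, hv, hw, hu, e1, e2, e3, e4⟩ := h
  refine ⟨hv, hw, ?_, ?_, ?_⟩
  all_goals
    have hgl : cs.length g ≤ Γ₁.card := by
      rw [hg, ← hlF, List.toFinset_card_of_nodup hl]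
      exact cs.length_wordProd_le l
    unfold WeakLE at *
  · have h1 : v₁⁻¹ * x = g * v₂ := by rw [hx]; group
    rw [h1]
    have := cs.length_mul_le g v₂
    have := cs.length_mul_le v₁ (g * v₂)
    rw [← mul_assoc, ← hx] at this
    omega
  · have h1 : v₂⁻¹⁻¹ * x⁻¹ = (v₁ * g)⁻¹ := by rw [hx]; group
    rw [h1]
    simp only [length_inv]
    have := cs.length_mul_le v₁ g
    have := cs.length_mul_le (v₁ * g) v₂
    rw [← hx] at this
    omega
  · have h1 : (w₁⁻¹ * u)⁻¹⁻¹ * y⁻¹ = w₂ := by rw [hy]; group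
    rw [h1]
    simp only [length_inv]
    omega

end RACG

/-- If Γ contains no induced square, then the counts R_{x,y}(i) are
uniformly bounded: there is K > 0 with R_{x,y}(i) ≤ K for all i ∈ ℕ and x, y ∈ W. -/
theorem tuple_count_bounded {B W : Type*} [Fintype B] [DecidableEq B] [Group W] {M : CoxeterMatrix B}
    (cs : CoxeterSystem M W) (hra : RightAngled M) (hsq : ¬HasInducedSquare M) :
    ∃ K : ℕ, 0 < K ∧ ∀ (i : ℕ) (x y : W),
      {p : W × Finset B × W × W × Finset B × W × W | TupleCond M cs i x y p}.Finite ∧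
      Set.ncard {p : W × Finset B × W × W × Finset B × W × W | TupleCond M cs i x y p} ≤ K := by
  classical
  set N := Fintype.card B with hN
  set S : Set W := {w : W | cs.length w ≤ 3 * N} with hS
  have hSf : S.Finite := RACG.finite_ball cs _
  let T : Set (W × W × W × W × Finset B × Finset B) :=
    S ×ˢ S ×ˢ S ×ˢ S ×ˢ Set.univ ×ˢ Set.univ
  have hT : T.Finite := hSf.prod <| hSf.prod <| hSf.prod <| hSf.prod <|
    Set.finite_univ.prod Set.finite_univ
  refine ⟨T.ncard + 1, Nat.succ_pos _, fun i x y => ?_⟩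
  set A := {p : W × Finset B × W × W × Finset B × W × W | TupleCond M cs i x y p} with hA
  rcases A.eq_empty_or_nonempty with h0 | ⟨⟨u₀, Γ₁₀, v₁₀, v₂₀, Γ₂₀, w₁₀, w₂₀⟩, hp₀⟩
  · simp [h0]
  -- Positions relative to the fixed tuple; `w₁⁻¹ u` is the part of `u` shared with `y`.
  let f : W × Finset B × W × W × Finset B × W × W → W × W × W × W × Finset B × Finset B :=
    fun p => match p with
    | (u, Γ₁, v₁, v₂, Γ₂, w₁, _) =>
      (v₁₀⁻¹ * v₁, v₁⁻¹ * w₁, (w₁₀⁻¹ * u₀) * (w₁⁻¹ * u)⁻¹, v₂₀ * v₂⁻¹, Γ₁, Γ₂)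
  have hmaps : Set.MapsTo f A T := by
    rintro ⟨u, Γ₁, v₁, v₂, Γ₂, w₁, w₂⟩ hp
    obtain ⟨a1, a2, a3, a4, a5⟩ := RACG.tuple_facts cs hp
    obtain ⟨b1, b2, b3, b4, b5⟩ := RACG.tuple_facts cs hp₀
    obtain ⟨-, -, -, -, -, -, c0, c1, c2, c3, c4⟩ := hp
    obtain ⟨-, -, -, -, -, -, d0, d1, d2, d3, d4⟩ := hp₀
    have k1 : Γ₁.card ≤ N := Finset.card_le_univ _
    have k2 : Γ₂.card ≤ N := Finset.card_le_univ _
    have k3 : Γ₁₀.card ≤ N := Finset.card_le_univ _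
    have k4 : Γ₂₀.card ≤ N := Finset.card_le_univ _
    have key := RACG.length_inv_mul_le cs hra hsq N
    have hz : cs.length w₁ + cs.length (w₁⁻¹ * u) = cs.length u := a2
    have hz₀ : cs.length w₁₀ + cs.length (w₁₀⁻¹ * u₀) = cs.length u₀ := b2
    have r1 := key v₁₀ v₁ x b3 a3 (by omega) (by omega)
    have r2 := key v₁ w₁ u a1 a2 (by omega) (by omega)
    have r3 := key (w₁₀⁻¹ * u₀)⁻¹ (w₁⁻¹ * u)⁻¹ y⁻¹ b5 a5
      (by rw [cs.length_inv, cs.length_inv]; omega) (by rw [cs.length_inv, cs.length_inv]; omega)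
    have r4 := key v₂₀⁻¹ v₂⁻¹ x⁻¹ b4 a4
      (by rw [cs.length_inv, cs.length_inv]; omega) (by rw [cs.length_inv, cs.length_inv]; omega)
    rw [inv_inv] at r3 r4
    have hR : 2 * Fintype.card B + N = 3 * N := by omega
    rw [hR] at r1 r2 r3 r4
    exact ⟨r1, r2, r3, r4, Set.mem_univ _, Set.mem_univ _⟩
  have hinj : Set.InjOn f A := by
    rintro ⟨u, Γ₁, v₁, v₂, Γ₂, w₁, w₂⟩ hp ⟨u', Γ₁', v₁', v₂', Γ₂', w₁', w₂'⟩ hp' h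
    obtain ⟨-, -, -, hy, -⟩ := hp
    obtain ⟨-, -, -, hy', -⟩ := hp'
    simp only [f, Prod.mk.injEq] at h
    obtain ⟨h1, h2, h3, h4, rfl, rfl⟩ := h
    obtain rfl := mul_left_cancel h1
    obtain rfl := mul_left_cancel h2
    obtain rfl := mul_left_cancel (inv_injective (mul_left_cancel h3))
    obtain rfl := inv_injective (mul_left_cancel h4)
    rw [hy] at hy'
    obtain rfl := mul_left_cancel (inv_injective (mul_right_cancel hy'))
    rfl
  exact ⟨Set.Finite.of_injOn hmaps hinj hT,
    (Set.ncard_le_ncard_of_injOn f hmaps hinj hT).trans (Nat.le_succ _)⟩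
end
end
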